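/- Let (R, m, k) be a commutative Noetherian local ring and let M be an Ulrich R-module of dimension s. If L is a finitely generated R-module such that Ext_R^i(L, M) = 0 for all 1 ≤ i ≤ s+1, then L is a free R-module. -/

import Mathlib

open CategoryTheory IsLocalRing

section Prelim

variable (R : Type) [CommRing R]

/-- `Tor_i^R(M, N) = 0`. -/
noncomputable def TorVanish (M N : Type) [AddCommGroup M] [Module R M]
    [AddCommGroup N] [Module R N] (i : ℕ) : Prop :=
  Subsingleton (((Tor (ModuleCat R) i).obj (ModuleCat.of R M)).obj (ModuleCat.of R N))

/-- `Ext_R^i(M, N) = 0`. -/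
noncomputable def ExtVanish (M N : Type) [AddCommGroup M] [Module R M]
    [AddCommGroup N] [Module R N] (i : ℕ) : Prop :=
  Subsingleton (((Ext R (ModuleCat R) i).obj (Opposite.op (ModuleCat.of R M))).obj
    (ModuleCat.of R N))

/-- `pd_R M < n`, expressed by the standard characterization
`Ext_R^i(M, -) = 0` for all `i ≥ n`. -/
def ProjDimLT (M : Type) [AddCommGroup M] [Module R M] (n : ℕ) : Prop :=
  ∀ (N : ModuleCat R) (i : ℕ), n ≤ i → ExtVanish R M N i

/-- `pd_R M < ∞`. -/
def ProjDimFinite (M : Type) [AddCommGroup M] [Module R M] : Prop :=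
  ∃ n, ProjDimLT R M n

/-- `id_R M < n`, expressed by the standard characterization
`Ext_R^i(-, M) = 0` for all `i ≥ n`. -/
def InjDimLT (M : Type) [AddCommGroup M] [Module R M] (n : ℕ) : Prop :=
  ∀ (N : ModuleCat R) (i : ℕ), n ≤ i → ExtVanish R N M i

/-- `id_R M < ∞`. -/
def InjDimFinite (M : Type) [AddCommGroup M] [Module R M] : Prop :=
  ∃ n, InjDimLT R M n

/-- `M` is a Tor-rigid `R`-module. -/
def TorRigid (M : Type) [AddCommGroup M] [Module R M] : Prop :=
  ∀ (N : ModuleCat R), Module.Finite R N → ∀ n : ℕ, 1 ≤ n → TorVanish R M N n →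
    ∀ i : ℕ, n ≤ i → TorVanish R M N i

variable [IsLocalRing R]

/-- The depth of `M`: the supremum of lengths of `M`-regular sequences contained in
the maximal ideal. -/
noncomputable def depth (M : Type) [AddCommGroup M] [Module R M] : ℕ∞ :=
  sSup {n : ℕ∞ | ∃ rs : List R, (∀ x ∈ rs, x ∈ maximalIdeal R) ∧
    RingTheory.Sequence.IsRegular M rs ∧ (rs.length : ℕ∞) = n}

/-- The dimension of a module, i.e. the Krull dimension of `R ⧸ ann M`. -/
noncomputable def moduleDim (M : Type) [AddCommGroup M] [Module R M] : WithBot ℕ∞ :=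
  ringKrullDim (R ⧸ Module.annihilator R M)

/-- `M` is an Ulrich `R`-module of dimension `s` : `M` is nonzero, Cohen–Macaulay of
dimension `s`, and there is an `M`-regular sequence `x₁, …, x_s` in the maximal ideal
with `mM = (x₁, …, x_s)M`. -/
def IsUlrich (M : Type) [AddCommGroup M] [Module R M] (s : ℕ) : Prop :=
  Nontrivial M ∧ moduleDim R M = (s : ℕ∞) ∧ depth R M = (s : ℕ∞) ∧
  ∃ rs : List R, rs.length = s ∧ (∀ x ∈ rs, x ∈ maximalIdeal R) ∧
    RingTheory.Sequence.IsRegular M rs ∧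
    (maximalIdeal R) • (⊤ : Submodule R M) = (Ideal.ofList rs) • ⊤

/-- `R` is a regular local ring: the maximal ideal is generated by `dim R` elements. -/
def IsRegularLocal : Prop :=
  ∃ s : Finset R, Ideal.span (s : Set R) = maximalIdeal R ∧
    (s.card : WithBot ℕ∞) = ringKrullDim R

/-- `R` (of dimension `d`) has minimal multiplicity: there is an `R`-regular sequence
`x₁, …, x_d` in the maximal ideal `m` with `m² = (x₁, …, x_d)m`. -/
def HasMinimalMultiplicity (d : ℕ) : Prop :=
  ∃ rs : List R, rs.length = d ∧ (∀ x ∈ rs, x ∈ maximalIdeal R) ∧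
    RingTheory.Sequence.IsWeaklyRegular R rs ∧
    maximalIdeal R ^ 2 = Ideal.ofList rs * maximalIdeal R

/-- The `n`-th Betti number of `M` over the local ring `R`, i.e. the dimension over the
residue field `k = R ⧸ m` of `Tor_n^R(M, k)` (which is an `m`-torsion module, so we take
the dimension of its reduction mod `m`). -/
noncomputable def betti (M : Type) [AddCommGroup M] [Module R M] (n : ℕ) : ℕ :=
  Module.finrank (R ⧸ maximalIdeal R)
    ((((Tor (ModuleCat R) n).obj (ModuleCat.of R M)).obj
        (ModuleCat.of R (R ⧸ maximalIdeal R))) ⧸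
      (maximalIdeal R • (⊤ : Submodule R
        (((Tor (ModuleCat R) n).obj (ModuleCat.of R M)).obj
          (ModuleCat.of R (R ⧸ maximalIdeal R))))))

end Prelim

/-!
Each `M`-regular element `x` gives a short exact sequence `0 → M → M → M/xM → 0`, which trades one
degree of vanishing for the passage from `M` to `M/xM`; after `s` steps `Ext¹(L, N) = 0` for
`N = M/(x₁, …, x_s)M`. The Ulrich condition makes `N` a nonzero `k`-vector space, so `k` is a direct
summand of it. Hence, for a presentation `0 → K → F → L → 0` with `F` finite free, every map `K → k`
extends to `F`. Dually `k ⊗ K → k ⊗ F` is injective, which forces `L` to be free.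
-/

universe w v u

section AbelianExt

variable {A : Type*} [Ring A] {C : Type u} [Category.{v} C] [Abelian C] [Linear A C]
  [HasExt.{w} C]

-- Mathlib's `CategoryTheory.Ext` is a left derived functor without long exact sequences, whereas
-- `Abelian.Ext` has them; a projective resolution computes both.
lemma subsingleton_abelianExt_succ_of_subsingleton_ext [EnoughProjectives C] {X Y : C} {n : ℕ}
    (h : Subsingleton (((Ext A C (n + 1)).obj (Opposite.op X)).obj Y)) :
    Subsingleton (Abelian.Ext X Y (n + 1)) := by
  let P := projectiveResolution X
  have hexact : (P.complex.linearYonedaObj A Y).ExactAt (n + 1) :=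
    (HomologicalComplex.exactAt_iff_isZero_homology _ _).2
      ((ModuleCat.isZero_of_subsingleton _).of_iso (P.isoExt (n + 1) Y).symm)
  rw [HomologicalComplex.exactAt_iff' _ n (n + 1) (n + 2) (by simp) (by simp),
    ShortComplex.moduleCat_exact_iff] at hexact
  refine subsingleton_of_forall_eq 0 fun α ↦ ?_
  obtain ⟨f, hf, rfl⟩ := P.extMk_surjective α (n + 2) rfl
  exact (P.extMk_eq_zero_iff f (n + 2) rfl hf n rfl).2 (hexact f hf)

lemma subsingleton_ext_of_iso {X Y Z : C} (e : Y ≅ Z) {n : ℕ}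
    (h : Subsingleton (Abelian.Ext X Y n)) : Subsingleton (Abelian.Ext X Z n) :=
  ((Abelian.extFunctorObj X n).mapIso e).addCommGroupIsoToAddEquiv.subsingleton_congr.1 h

lemma subsingleton_ext_X₃_of_shortExact {S : ShortComplex C} (hS : S.ShortExact) {X : C} {n : ℕ}
    (h₂ : Subsingleton (Abelian.Ext X S.X₂ n)) (h₁ : Subsingleton (Abelian.Ext X S.X₁ (n + 1))) :
    Subsingleton (Abelian.Ext X S.X₃ n) := by
  refine subsingleton_of_forall_eq 0 fun α ↦ ?_
  obtain ⟨β, rfl⟩ := Abelian.Ext.covariant_sequence_exact₃ X hS α rfl (Subsingleton.elim _ _)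
  rw [Subsingleton.elim β 0, Abelian.Ext.zero_comp]

lemma exists_comp_eq_of_subsingleton_ext_one {S : ShortComplex C} (hS : S.ShortExact) {Y : C}
    (h : Subsingleton (Abelian.Ext S.X₃ Y 1)) (φ : S.X₁ ⟶ Y) : ∃ ψ : S.X₂ ⟶ Y, S.f ≫ ψ = φ := by
  obtain ⟨α, hα⟩ := Abelian.Ext.contravariant_sequence_exact₁ hS Y (Abelian.Ext.mk₀ φ) (add_zero 1)
    (Subsingleton.elim _ _)
  obtain ⟨ψ, rfl⟩ := (Abelian.Ext.mk₀_bijective _ _).2 α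
  refine ⟨ψ, (Abelian.Ext.mk₀_bijective _ _).1 ?_⟩
  rwa [Abelian.Ext.mk₀_comp_mk₀] at hα

end AbelianExt

section RegularSequence

variable {R : Type u} [CommRing R] [Small.{v} R]

lemma subsingleton_ext_quotient_ofList_smul_top {X : ModuleCat.{v} R} {M : Type v}
    [AddCommGroup M] [Module R M] {rs : List R}
    (hrs : RingTheory.Sequence.IsWeaklyRegular M rs) {n : ℕ}
    (h : ∀ i, n ≤ i → i ≤ n + rs.length → Subsingleton (Abelian.Ext X (ModuleCat.of R M) i)) :
    Subsingleton
      (Abelian.Ext X (ModuleCat.of R (M ⧸ (Ideal.ofList rs • ⊤ : Submodule R M))) n) := by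
  induction rs generalizing M with
  | nil =>
    have e : M ≃ₗ[R] M ⧸ (Ideal.ofList ([] : List R) • ⊤ : Submodule R M) :=
      (Submodule.quotEquivOfEqBot _ (by rw [Ideal.ofList_nil, Submodule.bot_smul])).symm
    exact subsingleton_ext_of_iso e.toModuleIso (h n le_rfl le_rfl)
  | cons x rs ih =>
    obtain ⟨hx, hrs'⟩ := (RingTheory.Sequence.isWeaklyRegular_cons_iff M x rs).1 hrs
    rw [List.length_cons] at h
    have hquot (i : ℕ) (hni : n ≤ i) (hi : i ≤ n + rs.length) :
        Subsingleton (Abelian.Ext X (ModuleCat.of R (QuotSMulTop x M)) i) :=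
      subsingleton_ext_X₃_of_shortExact
        (IsSMulRegular.smulShortComplex_shortExact (M := ModuleCat.of R M) hx)
        (h i hni (by lia)) (h (i + 1) (by lia) (by lia))
    exact subsingleton_ext_of_iso
      (Submodule.quotOfListConsSMulTopEquivQuotSMulTopInner M x rs).symm.toModuleIso
      (ih hrs' hquot)

end RegularSequence

section LocalRing

variable {R : Type u} [CommRing R] [IsLocalRing R]

lemma exists_residueField_retract_of_isTorsionBySet {N : Type*} [AddCommGroup N] [Module R N]
    [Nontrivial N] (hN : Module.IsTorsionBySet R N (maximalIdeal R)) :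
    ∃ (ι : ResidueField R →ₗ[R] N) (ρ : N →ₗ[R] ResidueField R), ρ ∘ₗ ι = LinearMap.id := by
  let : Module (ResidueField R) N := hN.module
  have : IsScalarTower R (ResidueField R) N := hN.isScalarTower
  obtain ⟨y, hy⟩ := exists_ne (0 : N)
  obtain ⟨ρ, hρ⟩ := (LinearMap.toSpanSingleton (ResidueField R) N y).exists_leftInverse_of_injective
    (LinearMap.ker_toSpanSingleton _ hy)
  exact ⟨(LinearMap.toSpanSingleton (ResidueField R) N y).restrictScalars R, ρ.restrictScalars R,
    congrArg (LinearMap.restrictScalars R) hρ⟩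

lemma free_of_forall_exists_comp_eq_residueField {K F L : Type*}
    [AddCommGroup K] [Module R K] [AddCommGroup F] [Module R F] [AddCommGroup L] [Module R L]
    [Module.Finite R K] [Module.Finite R F] [Module.Free R F] {i : K →ₗ[R] F} {p : F →ₗ[R] L}
    (hp : Function.Surjective p) (hip : Function.Exact i p)
    (h : ∀ φ : K →ₗ[R] ResidueField R, ∃ ψ : F →ₗ[R] ResidueField R, ψ ∘ₗ i = φ) :
    Module.Free R L := by
  have hdual : Function.Surjective (i.baseChange (ResidueField R)).dualMap := fun Λ ↦ by
    obtain ⟨ψ, hψ⟩ := h (Λ.restrictScalars R ∘ₗ TensorProduct.mk R (ResidueField R) K 1)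
    refine ⟨ψ.liftBaseChange (ResidueField R), ?_⟩
    ext x
    simpa using LinearMap.congr_fun hψ x
  exact Module.free_of_lTensor_residueField_injective i p hp hip
    (LinearMap.dualMap_surjective_iff.1 hdual)

lemma free_of_subsingleton_ext_one [Small.{v} R] {L N : Type v} [AddCommGroup L] [Module R L]
    [Module.FinitePresentation R L] [AddCommGroup N] [Module R N] [Nontrivial N]
    (hN : Module.IsTorsionBySet R N (maximalIdeal R))
    (h : Subsingleton (Abelian.Ext (ModuleCat.of R L) (ModuleCat.of R N) 1)) : Module.Free R L := by
  obtain ⟨F, _, _, _, _, p, hp⟩ := Module.exists_finite_presentation R L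
  have : Module.Finite R (LinearMap.ker p) := .of_fg (Module.FinitePresentation.fg_ker p hp)
  obtain ⟨ι, ρ, hρι⟩ := exists_residueField_retract_of_isTorsionBySet hN
  refine free_of_forall_exists_comp_eq_residueField hp (LinearMap.exact_subtype_ker_map p)
    fun φ ↦ ?_
  obtain ⟨ψ, hψ⟩ := exists_comp_eq_of_subsingleton_ext_one
    (LinearMap.shortExact_shortComplexKer hp) h (ModuleCat.ofHom (ι ∘ₗ φ))
  have hψ' : ψ.hom ∘ₗ (LinearMap.ker p).subtype = ι ∘ₗ φ := congrArg ModuleCat.Hom.hom hψ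
  refine ⟨ρ ∘ₗ ψ.hom, ?_⟩
  rw [LinearMap.comp_assoc, hψ', ← LinearMap.comp_assoc, hρι, LinearMap.id_comp]

theorem statement5_general [Small.{v} R] {L M : Type v} [AddCommGroup L] [Module R L]
    [Module.FinitePresentation R L] [AddCommGroup M] [Module R M] {rs : List R}
    (hreg : RingTheory.Sequence.IsRegular M rs)
    (hrs : maximalIdeal R • (⊤ : Submodule R M) ≤ Ideal.ofList rs • ⊤)
    (hvan : ∀ i, 1 ≤ i → i ≤ rs.length + 1 →
      Subsingleton (Abelian.Ext (ModuleCat.of R L) (ModuleCat.of R M) i)) :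
    Module.Free R L := by
  have : Nontrivial (M ⧸ (Ideal.ofList rs • ⊤ : Submodule R M)) :=
    Submodule.Quotient.nontrivial_iff.2 hreg.top_ne_smul.symm
  have htorsion : Module.IsTorsionBySet R (M ⧸ (Ideal.ofList rs • ⊤ : Submodule R M))
      (maximalIdeal R) :=
    (Module.isTorsionBySet_quotient_iff _ _).2 fun x r hr ↦
      hrs (Submodule.smul_mem_smul hr Submodule.mem_top)
  refine free_of_subsingleton_ext_one htorsion ?_
  exact subsingleton_ext_quotient_ofList_smul_top hreg.toIsWeaklyRegular
    fun i hi hi' ↦ hvan i hi (by lia)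

end LocalRing

theorem statement5 (R : Type) [CommRing R] [IsNoetherianRing R] [IsLocalRing R]
    (M : Type) [AddCommGroup M] [Module R M] [Module.Finite R M]
    (s : ℕ) (hM : IsUlrich R M s)
    (L : Type) [AddCommGroup L] [Module R L] [Module.Finite R L]
    (hvan : ∀ i : ℕ, 1 ≤ i → i ≤ s + 1 → ExtVanish R L M i) :
    Module.Free R L := by
  obtain ⟨-, -, -, rs, rfl, -, hreg, hmM⟩ := hM
  have := Module.finitePresentation_of_finite R L
  refine statement5_general hreg hmM.le fun i hi his ↦ ?_
  obtain ⟨n, rfl⟩ := Nat.exists_eq_add_of_le' hi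
  exact subsingleton_abelianExt_succ_of_subsingleton_ext (hvan (n + 1) hi his)
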